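/- arXiv:2009.10512 — 3 statements merged into one kernel-verified Lean document; each statement's English description precedes it below -/
import Mathlib

section
/- Lemma. Let R be a commutative ring and a ∈ R. Assume R is a-torsion free (for all x ∈ R, a·x = 0 implies x = 0) and R is a-adically complete (complete and separated for the topology defined by the ideals a^k R). Let n ∈ ℕ and let φ : R^n → R^n be an R-linear endomorphism of the free module R^n. Then φ is bijective if and only if the induced (R/aR)-linear endomorphism of (R/aR)^n obtained by reducing φ modulo a is bijective. -/
/-- **Lemma (invertibility lifts along `a`-adic completion).**
Let `R` be `a`-torsion free and `a`-adically complete. An `R`-linear endomorphism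
`φ` of `R^n` is bijective if and only if its reduction modulo `a`, i.e. the
`(R/aR)`-linear endomorphism of `(R/aR)^n` given by the matrix of `φ` with entries
reduced mod `a`, is bijective. -/
theorem bijective_iff_bijective_mod_of_adic_complete
    (R : Type) [CommRing R] (a : R)
    -- `R` is `a`-torsion free
    (htf : ∀ x : R, a * x = 0 → x = 0)
    -- `R` is `a`-adically complete (complete and separated for the `a`-adic topology)
    (hcomplete : IsAdicComplete (Ideal.span {a}) R)
    (n : ℕ) (φ : (Fin n → R) →ₗ[R] (Fin n → R)) :
    Function.Bijective φ ↔
      Function.Bijective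
        (Matrix.toLin'
          ((LinearMap.toMatrix' φ).map (Ideal.Quotient.mk (Ideal.span {a})))) := by
  have := isLocalHom_of_le_jacobson_bot _ (IsAdicComplete.le_jacobson_bot (Ideal.span {a}))
  have key : ∀ (S : Type) [CommRing S] (M : Matrix (Fin n) (Fin n) S),
      Function.Bijective (Matrix.toLin' M) ↔ IsUnit M.det := by
    intro S _ M
    rw [← Matrix.isUnit_iff_isUnit_det, ← Matrix.isUnit_toLin'_iff]
    exact (Module.End.isUnit_iff _).symm
  have h := key R (LinearMap.toMatrix' φ)
  rw [Matrix.toLin'_toMatrix'] at h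
  have hdet : ((LinearMap.toMatrix' φ).map (Ideal.Quotient.mk (Ideal.span {a}))).det =
      Ideal.Quotient.mk (Ideal.span {a}) (LinearMap.toMatrix' φ).det :=
    (RingHom.map_det _ _).symm
  rw [h, key, hdet]
  exact (isUnit_map_iff (Ideal.Quotient.mk (Ideal.span {a})) _).symm
end

section
/- Matrix congruence computation from the proof of the limit formula. Let R be a commutative ring, p a prime, σ : R → R a ring endomorphism, and n a finite (index) type; for an n × n matrix M over R write M^σ for the matrix obtained by applying σ to each entry. Let b_1 be an invertible n × n matrix over R and define b_s for s ≥ 1 recursively by b_{s+1} = b_1 · (b_s)^σ (so b_s = b_1 · b_1^σ ⋯ b_1^{σ^{s−1}}). Suppose (α_s)_{s≥1} is a sequence of invertible n × n matrices over R such that α_s ≡ b_s (mod p^s R) entrywise for every s ≥ 1. Then for every s ≥ 1, α_{s+1} · (α_s^σ)^{−1} ≡ b_1 (mod p^s R) entrywise. -/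
/-- **Matrix congruence computation from the proof of the limit formula.**
If `b_{s+1} = b_1 ⬝ (b_s)^σ` with `b_1` invertible, and `(α_s)` are invertible matrices
with `α_s ≡ b_s (mod p^s)` entrywise, then `α_{s+1} ⬝ (α_s^σ)⁻¹ ≡ b_1 (mod p^s)` entrywise. -/
theorem matrix_quotient_congruence
    (R : Type) [CommRing R]
    (p : ℕ) (hp : p.Prime)
    (σ : R →+* R)
    (n : Type) [Fintype n] [DecidableEq n]
    (b : ℕ → Matrix n n R)
    (hb1 : IsUnit (b 1))
    (hbrec : ∀ s : ℕ, 1 ≤ s → b (s + 1) = b 1 * (b s).map σ)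
    (α : ℕ → Matrix n n R)
    (hαunit : ∀ s : ℕ, 1 ≤ s → IsUnit (α s))
    (hcong : ∀ s : ℕ, 1 ≤ s → ∀ u v : n, (α s - b s) u v ∈ Ideal.span {(p : R) ^ s}) :
    ∀ s : ℕ, 1 ≤ s → ∀ u v : n,
      (α (s + 1) * ((α s).map σ)⁻¹ - b 1) u v ∈ Ideal.span {(p : R) ^ s} := by
  intro s hs u v
  set I := Ideal.span {(p : R) ^ s} with hI
  have hunit : IsUnit ((α s).map σ) := (hαunit s hs).map σ.mapMatrix
  have hdet : IsUnit ((α s).map σ).det := (Matrix.isUnit_iff_isUnit_det _).1 hunit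
  have key : α (s + 1) * ((α s).map σ)⁻¹ - b 1
      = ((α (s + 1) - b (s + 1)) - b 1 * ((α s).map σ - (b s).map σ)) * ((α s).map σ)⁻¹ := by
    rw [hbrec s hs, mul_sub, sub_sub_sub_cancel_right, sub_mul, mul_assoc (b 1),
      Matrix.mul_nonsing_inv _ hdet, mul_one]
  have h1 : ∀ i j, (α (s + 1) - b (s + 1)) i j ∈ I := by
    intro i j
    have h := hcong (s + 1) (by omega) i j
    rw [Ideal.mem_span_singleton] at h
    rw [hI, Ideal.mem_span_singleton]
    exact (pow_dvd_pow _ (Nat.le_succ s)).trans h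
  have h2 : ∀ i j, ((α s).map σ - (b s).map σ) i j ∈ I := by
    intro i j
    have h := hcong s hs i j
    rw [Ideal.mem_span_singleton] at h
    rw [hI, Ideal.mem_span_singleton]
    have h' := map_dvd σ h
    simpa using h'
  rw [key, Matrix.mul_apply]
  refine Ideal.sum_mem _ fun k _ => Ideal.mul_mem_right _ _ ?_
  rw [Matrix.sub_apply]
  refine I.sub_mem (h1 u k) ?_
  rw [Matrix.mul_apply]
  exact Ideal.sum_mem _ fun l _ => Ideal.mul_mem_left _ _ (h2 l k)
end

section
/- Core congruence of the two-basic-sets-of-curves lemma. Let p be a prime, R a commutative ring, M an R-module, and I a finite index type. Suppose given elements x(j,n,i) ∈ R for j, i ∈ I and n ∈ ℕ such that x(i,0,i) = 1 for all i ∈ I and x(j,n,i) ∈ pR whenever it is not the case that (n = 0 and i = j). Suppose given families a, a* : I → ℕ → M satisfying, for all j ∈ I and all s ∈ ℕ, a(j,s) = Σ_{n=0}^{s} Σ_{i∈I} p^n · x(j,n,i)^{p^{s−n}} · a*(i, s−n). Then for all j ∈ I and all s ∈ ℕ, a(j,s) − a*(j,s) ∈ p^s M. -/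
/-- **Core congruence of the two-basic-sets-of-curves lemma.**
Given `x(j,n,i) ∈ R` with `x(i,0,i) = 1` and `x(j,n,i) ∈ pR` unless `n = 0` and `i = j`,
and families `a, a* : I → ℕ → M` related by
`a(j,s) = Σ_{n=0}^{s} Σ_{i∈I} p^n · x(j,n,i)^{p^{s−n}} · a*(i, s−n)`,
we have `a(j,s) − a*(j,s) ∈ p^s M` for all `j` and `s`. -/
theorem curves_core_congruence
    (p : ℕ) (hp : p.Prime)
    (R : Type) [CommRing R]
    (M : Type) [AddCommGroup M] [Module R M]
    (I : Type) [Fintype I]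
    (x : I → ℕ → I → R)
    (hx1 : ∀ i : I, x i 0 i = 1)
    (hxp : ∀ (j : I) (n : ℕ) (i : I), ¬(n = 0 ∧ i = j) → x j n i ∈ Ideal.span {(p : R)})
    (a astar : I → ℕ → M)
    (hrel : ∀ (j : I) (s : ℕ),
      a j s = ∑ n ∈ Finset.range (s + 1), ∑ i : I,
        ((p : R) ^ n * (x j n i) ^ (p ^ (s - n))) • astar i (s - n)) :
    ∀ (j : I) (s : ℕ), ∃ m : M, a j s - astar j s = ((p : R) ^ s) • m := by
  classical
  intro j s
  let N : Submodule R M := LinearMap.range (LinearMap.lsmul R M ((p : R) ^ s))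
  suffices h : a j s - astar j s ∈ N by
    obtain ⟨m, hm⟩ := h
    exact ⟨m, by rw [← hm]; rfl⟩
  have key : ∀ (n : ℕ) (i : I), n ≤ s → ¬(n = 0 ∧ i = j) →
      ((p : R) ^ n * (x j n i) ^ (p ^ (s - n))) • astar i (s - n) ∈ N := by
    intro n i hn h
    obtain ⟨y, hy⟩ := Ideal.mem_span_singleton.mp (hxp j n i h)
    have hle : s ≤ n + p ^ (s - n) := by
      have := (Nat.lt_pow_self hp.one_lt : s - n < p ^ (s - n))
      omega
    have hd : (p : R) ^ s ∣ (p : R) ^ n * (x j n i) ^ (p ^ (s - n)) := by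
      rw [hy, mul_pow, ← mul_assoc, ← pow_add]
      exact Dvd.dvd.mul_right (pow_dvd_pow _ hle) _
    obtain ⟨c, hc⟩ := hd
    rw [hc, mul_smul]
    exact ⟨c • astar i (s - n), rfl⟩
  rw [hrel j s, Finset.sum_range_succ', ← Finset.add_sum_erase Finset.univ _ (Finset.mem_univ j)]
  have e : ((p : R) ^ 0 * (x j 0 j) ^ (p ^ (s - 0))) • astar j (s - 0) = astar j s := by
    simp [hx1]
  rw [e, add_sub_assoc, add_sub_cancel_left]
  refine N.add_mem (N.sum_mem fun n hn => N.sum_mem fun i _ => ?_) (N.sum_mem fun i hi => ?_)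
  · exact key (n + 1) i (by have := Finset.mem_range.mp hn; omega) (by simp)
  · exact key 0 i (Nat.zero_le _) (fun h => (Finset.ne_of_mem_erase hi) h.2)
end
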